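/- Let φ : ℝ → ℝ be a C^∞ sigmoid (0 < φ < 1, φ′ > 0, φ(z) → 1 as z → +∞, φ(z) → 0 as z → −∞) satisfying the algebraic-decay assumption (A). Fix α ∈ (0,1), α + β > 1, μ ≥ 0 and η > 0 with η ≠ 1 + μ/α and η ≠ 1 + μ/(α+β). Then there exists ε₀ > 0 such that for every ε ∈ (0, ε₀), the planar system ẋ = (α + β φ((x−1)/ε)) y − x, ẏ = η − (μ + α + β φ((x−1)/ε)) y has no nonconstant periodic solutions, and the ω-limit set of every solution with bounded forward orbit is contained in the set of equilibria of the system. -/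

import Mathlib

open Filter Topology

/-- The substrate-depletion vector field
`(x, y) ↦ ((α + βφ((x−1)/ε))y − x, η − (μ + α + βφ((x−1)/ε))y)`. -/
noncomputable def sdVF (φ : ℝ → ℝ) (α β μ η ε : ℝ) (p : ℝ × ℝ) : ℝ × ℝ :=
  ((α + β * φ ((p.1 - 1) / ε)) * p.2 - p.1,
   η - (μ + α + β * φ ((p.1 - 1) / ε)) * p.2)

/-!
The velocity `(ẋ, ẏ)` of a solution satisfies the linearized equation, whose feedback gain is
`e = β φ'((x - 1) / ε) y / ε`. It suffices to show that the velocity tends to zero: a periodic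
solution is then constant, and every ω-limit point is an equilibrium.

Off any neighbourhood of the line `x = 1` the decay `φ'(z) = o(1 / z)` makes `e` small as `ε → 0`,
and the linearized equation contracts. Since `η` is not critical, for small `ε` the vector field
crosses the lines `x = 1 ± δ` in one direction only, so a solution eventually stays on one side of
each. It cannot stay on a side whose limiting node lies beyond `x = 1`, because a suitable
combination of `x` and `y` would be unbounded there. The only solutions that may remain in
`|x - 1| ≤ δ` occur for `1 + μ / (α + β) < η < 1 + μ / α`; they enter the layer `|x - 1| ≤ ε Z`,
where `e` is of order `1 / ε`. There the linearized equation has a strongly repelling direction, and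
the velocity, being bounded, has to vanish in the limit.
-/

open Bornology (cobounded)

/-! ### Scalar differential inequalities -/

section Barriers

variable {f f' : ℝ → ℝ} {a c C : ℝ}

theorem tendsto_atTop_of_eventually_le_deriv (hf : ∀ t, HasDerivAt f (f' t) t) (hc : 0 < c)
    (h : ∀ᶠ t in atTop, c ≤ f' t) : Tendsto f atTop atTop := by
  obtain ⟨t₀, ht₀⟩ := eventually_atTop.1 h
  have linear_growth : ∀ t ≥ t₀, f t₀ + c * (t - t₀) ≤ f t := fun t ht => by
    have := (convex_Ici t₀).mul_sub_le_image_sub_of_le_deriv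
      (fun s _ => (hf s).continuousAt.continuousWithinAt)
      (fun s _ => (hf s).differentiableAt.differentiableWithinAt)
      (fun s hs => (hf s).deriv ▸ ht₀ s (interior_subset hs)) t₀ Set.self_mem_Ici t ht ht
    linarith
  refine tendsto_atTop_mono' _ ((eventually_ge_atTop t₀).mono linear_growth) ?_
  exact tendsto_atTop_add_const_left _ _
    ((tendsto_atTop_add_const_right _ (-t₀) tendsto_id).const_mul_atTop hc)

theorem eventually_ge_or_eventually_lt_of_deriv_pos (hf : ∀ t, HasDerivAt f (f' t) t)
    (h : ∀ᶠ t in atTop, f t = a → 0 < f' t) :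
    (∀ᶠ t in atTop, a ≤ f t) ∨ ∀ᶠ t in atTop, f t < a := by
  obtain ⟨t₀, ht₀⟩ := eventually_atTop.1 h
  by_cases reached : ∃ t₁ ≥ t₀, a ≤ f t₁
  · obtain ⟨t₁, ht₁, ha⟩ := reached
    refine .inl ((eventually_ge_atTop t₁).mono fun t ht => ?_)
    exact image_le_of_deriv_right_lt_deriv_boundary' continuousOn_const
      (fun s _ => hasDerivWithinAt_const s _ a) ha
      (fun s _ => (hf s).continuousAt.continuousWithinAt) (fun s _ => (hf s).hasDerivWithinAt)
      (fun s hs has => ht₀ s (ht₁.trans hs.1) has.symm) ⟨ht, le_rfl⟩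
  · push Not at reached
    exact .inr ((eventually_ge_atTop t₀).mono reached)

theorem eventually_ge_of_le_deriv_below (hf : ∀ t, HasDerivAt f (f' t) t) (hc : 0 < c)
    (h : ∀ᶠ t in atTop, f t ≤ a → c ≤ f' t) : ∀ᶠ t in atTop, a ≤ f t := by
  refine (eventually_ge_or_eventually_lt_of_deriv_pos hf
    (h.mono fun t ht hta => hc.trans_le (ht hta.le))).resolve_right fun below => ?_
  have unbounded := tendsto_atTop_of_eventually_le_deriv hf hc
    (h.mp (below.mono fun t hta ht => ht hta.le))
  obtain ⟨t, hlt, hge⟩ := (below.and (unbounded.eventually_ge_atTop a)).exists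
  exact hlt.not_ge hge

theorem eventually_lt_of_le_deriv_above (hf : ∀ t, HasDerivAt f (f' t) t) (hc : 0 < c)
    (h : ∀ᶠ t in atTop, a ≤ f t → c ≤ f' t) (hC : ∀ᶠ t in atTop, f t ≤ C) :
    ∀ᶠ t in atTop, f t < a := by
  refine (eventually_ge_or_eventually_lt_of_deriv_pos hf
    (h.mono fun t ht hta => hc.trans_le (ht hta.ge))).resolve_left fun above => ?_
  have unbounded := tendsto_atTop_of_eventually_le_deriv hf hc
    (h.mp (above.mono fun t hta ht => ht hta))
  obtain ⟨t, hle, hgt⟩ := (hC.and (unbounded.eventually_gt_atTop C)).exists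
  exact hle.not_gt hgt

end Barriers

section ScalarLinear

variable {f g k : ℝ → ℝ} {k₀ m M C : ℝ}

theorem pos_of_eventually_abs_le_of_lt_mul (hk₀ : 0 < k₀) (hg : ∀ᶠ t in atTop, |g t| ≤ m)
    (hM : m < k₀ * M) : 0 < M := by
  obtain ⟨t, ht⟩ := hg.exists
  exact (pos_iff_pos_of_mul_pos (((abs_nonneg _).trans ht).trans_lt hM)).1 hk₀

theorem eventually_abs_le_of_damped (hf : ∀ t, HasDerivAt f (-k t * f t + g t) t)
    (hk₀ : 0 < k₀) (hk : ∀ᶠ t in atTop, k₀ ≤ k t) (hg : ∀ᶠ t in atTop, |g t| ≤ m)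
    (hM : m < k₀ * M) : ∀ᶠ t in atTop, |f t| ≤ M := by
  have M_pos := pos_of_eventually_abs_le_of_lt_mul hk₀ hg hM
  have lower : ∀ {f g : ℝ → ℝ}, (∀ t, HasDerivAt f (-k t * f t + g t) t) →
      (∀ᶠ t in atTop, |g t| ≤ m) → ∀ᶠ t in atTop, -M ≤ f t := fun hf hg => by
    refine eventually_ge_of_le_deriv_below hf (sub_pos.2 hM) ?_
    filter_upwards [hk, hg] with t hkt hgt hft
    have := mul_le_mul_of_nonneg_left hft (hk₀.le.trans hkt)
    have := mul_le_mul_of_nonneg_right hkt M_pos.le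
    linarith [neg_le_of_abs_le hgt]
  have upper := lower (f := fun t => -f t) (g := fun t => -g t)
    (fun t => (hf t).neg.congr_deriv (by ring)) (by simpa only [abs_neg] using hg)
  filter_upwards [lower hf hg, upper] with t h₁ h₂
  exact abs_le.2 ⟨h₁, by linarith⟩

theorem eventually_abs_le_of_repelled (hf : ∀ t, HasDerivAt f (k t * f t + g t) t)
    (hk₀ : 0 < k₀) (hk : ∀ᶠ t in atTop, k₀ ≤ k t) (hg : ∀ᶠ t in atTop, |g t| ≤ m)
    (hM : m < k₀ * M) (hC : ∀ᶠ t in atTop, |f t| ≤ C) : ∀ᶠ t in atTop, |f t| ≤ M := by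
  have M_pos := pos_of_eventually_abs_le_of_lt_mul hk₀ hg hM
  have upper : ∀ {f g : ℝ → ℝ}, (∀ t, HasDerivAt f (k t * f t + g t) t) →
      (∀ᶠ t in atTop, |g t| ≤ m) → (∀ᶠ t in atTop, |f t| ≤ C) → ∀ᶠ t in atTop, f t < M :=
    fun hf hg hC => by
    refine eventually_lt_of_le_deriv_above hf (sub_pos.2 hM) ?_ (hC.mono fun t => le_of_abs_le)
    filter_upwards [hk, hg] with t hkt hgt hft
    have := mul_le_mul hkt hft M_pos.le (hk₀.le.trans hkt)
    linarith [neg_le_of_abs_le hgt]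
  have lower := upper (f := fun t => -f t) (g := fun t => -g t)
    (fun t => (hf t).neg.congr_deriv (by ring)) (by simpa only [abs_neg] using hg)
    (by simpa only [abs_neg] using hC)
  filter_upwards [upper hf hg hC, lower] with t h₁ h₂
  exact abs_le.2 ⟨by linarith, h₁.le⟩

theorem tendsto_zero_of_damped (hf : ∀ t, HasDerivAt f (-k t * f t + g t) t)
    (hk₀ : 0 < k₀) (hk : ∀ᶠ t in atTop, k₀ ≤ k t) (hg : Tendsto g atTop (𝓝 0)) :
    Tendsto f atTop (𝓝 0) := by
  refine Metric.tendsto_nhds.2 fun r hr => ?_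
  have small_forcing : ∀ᶠ t in atTop, |g t| ≤ k₀ * (r / 4) := by
    filter_upwards [Metric.tendsto_nhds.1 hg (k₀ * (r / 4)) (by positivity)] with t ht
    simpa only [Real.dist_0_eq_abs] using ht.le
  have small_response := eventually_abs_le_of_damped (M := r / 2) hf hk₀ hk small_forcing
    (by gcongr; linarith)
  filter_upwards [small_response] with t ht
  rw [Real.dist_0_eq_abs]
  linarith

theorem tendsto_zero_of_eventually_abs_halving
    (halving : ∀ M > 0, (∀ᶠ t in atTop, |f t| ≤ M) → ∀ᶠ t in atTop, |f t| ≤ M / 2)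
    (hC : ∀ᶠ t in atTop, |f t| ≤ C) : Tendsto f atTop (𝓝 0) := by
  have C_pos : 0 < max C 1 := lt_max_of_lt_right one_pos
  have dyadic_bound : ∀ n : ℕ, ∀ᶠ t in atTop, |f t| ≤ max C 1 / 2 ^ n := fun n => by
    induction n with
    | zero => simpa using hC.mono fun t ht => Or.inl ht
    | succ n ih => simpa only [pow_succ, div_div] using halving _ (by positivity) ih
  refine Metric.tendsto_nhds.2 fun r hr => ?_
  obtain ⟨n, hn⟩ := exists_pow_lt_of_lt_one (div_pos hr C_pos) one_half_lt_one
  filter_upwards [dyadic_bound n] with t ht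
  rw [Real.dist_0_eq_abs]
  calc |f t| ≤ max C 1 * (1 / 2) ^ n := by rwa [one_div, inv_pow, ← div_eq_mul_inv]
    _ < max C 1 * (r / max C 1) := by gcongr
    _ = r := mul_div_cancel₀ r C_pos.ne'

end ScalarLinear

/-- The factor by which the slow equation `f' = -μ f - (1 - μ) g` may amplify an eventual bound
on `g`. Any number larger than `|1 - μ| / μ` would do. -/
noncomputable def slowGain (μ : ℝ) : ℝ := (|1 - μ| + 1) / μ

theorem eventually_abs_le_slowGain_mul {f g : ℝ → ℝ} {μ M : ℝ} (hμ : 0 < μ) (hM : 0 < M)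
    (hf : ∀ t, HasDerivAt f (-μ * f t + -(1 - μ) * g t) t) (hg : ∀ᶠ t in atTop, |g t| ≤ M) :
    ∀ᶠ t in atTop, |f t| ≤ slowGain μ * M := by
  refine eventually_abs_le_of_damped (m := |1 - μ| * M) hf hμ
    (.of_forall fun _ => le_rfl) ?_ ?_
  · filter_upwards [hg] with t ht
    rw [abs_mul, abs_neg]
    gcongr
  · have : μ * (slowGain μ * M) = (|1 - μ| + 1) * M := by rw [slowGain]; field_simp
    linarith

/-! ### Small-gain estimates for the linearized equation -/

/-- The linearization along a solution of the oscillator, with feedback gain `e` and conversion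
rate `P`; its velocity `(u, v) = (ẋ, ẏ)` satisfies this equation. -/
structure IsVariationalSolution (μ : ℝ) (e P u v : ℝ → ℝ) : Prop where
  hasDerivAt_fst : ∀ t, HasDerivAt u ((e t - 1) * u t + P t * v t) t
  hasDerivAt_snd : ∀ t, HasDerivAt v (-e t * u t - (μ + P t) * v t) t

namespace IsVariationalSolution

variable {μ a b e₀ K C : ℝ} {e P u v : ℝ → ℝ}

/-- Small-gain argument: an eventual bound `M` on `u` forces the bound `M / (8 b)` on `v`, which
in turn forces the bound `M / 2` on `u`. -/
theorem tendsto_zero_of_weak_feedback (h : IsVariationalSolution μ e P u v) (hμ : 0 ≤ μ)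
    (ha : 0 < a) (hP : ∀ t, P t ∈ Set.Icc a b) (he : ∀ᶠ t in atTop, e t ∈ Set.Icc 0 e₀)
    (he₀ : 8 * b * e₀ < a) (hC : ∀ᶠ t in atTop, |u t| ≤ C) :
    Tendsto u atTop (𝓝 0) ∧ Tendsto v atTop (𝓝 0) := by
  have hab : a ≤ b := (hP 0).1.trans (hP 0).2
  have b_pos : 0 < b := ha.trans_le hab
  have e₀_lt : e₀ < 1 / 8 := lt_of_mul_lt_mul_left (a := 8 * b) (by linarith) (by positivity)
  have damping_v : ∀ᶠ t in atTop, a ≤ μ + P t := .of_forall fun t => by linarith [(hP t).1]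
  have damping_u : ∀ᶠ t in atTop, 1 / 2 ≤ 1 - e t := he.mono fun t ht => by linarith [ht.2]
  have hu : ∀ t, HasDerivAt u (-(1 - e t) * u t + P t * v t) t := fun t =>
    (h.hasDerivAt_fst t).congr_deriv (by ring)
  have hv : ∀ t, HasDerivAt v (-(μ + P t) * v t + -(e t * u t)) t := fun t =>
    (h.hasDerivAt_snd t).congr_deriv (by ring)
  have u_tendsto : Tendsto u atTop (𝓝 0) := by
    refine tendsto_zero_of_eventually_abs_halving (fun M hM hu_le => ?_) hC
    have hv_le : ∀ᶠ t in atTop, |v t| ≤ M / (8 * b) := by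
      refine eventually_abs_le_of_damped (m := e₀ * M) hv ha damping_v ?_ ?_
      · filter_upwards [he, hu_le] with t het hut
        rw [abs_neg, abs_mul, abs_of_nonneg het.1]
        exact mul_le_mul het.2 hut (abs_nonneg _) (het.1.trans het.2)
      · rw [← mul_div_assoc, lt_div_iff₀ (by positivity)]
        linarith [mul_lt_mul_of_pos_right he₀ hM]
    refine eventually_abs_le_of_damped (m := M / 8) hu one_half_pos damping_u ?_ (by linarith)
    filter_upwards [hv_le] with t hvt
    calc |P t * v t| = P t * |v t| := by rw [abs_mul, abs_of_pos (ha.trans_le (hP t).1)]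
      _ ≤ b * (M / (8 * b)) := mul_le_mul (hP t).2 hvt (abs_nonneg _) b_pos.le
      _ = M / 8 := by field_simp
  refine ⟨u_tendsto, tendsto_zero_of_damped hv ha damping_v ?_⟩
  have e_bounded : ∀ᶠ t in atTop, |e t| ≤ e₀ := he.mono fun t ht =>
    (abs_of_nonneg ht.1).trans_le ht.2
  simpa using (bdd_le_mul_tendsto_zero' e₀ e_bounded u_tendsto).neg

/-- With `w = u + v` the equation becomes `u' = (e - 1 - P) u + P w`, `w' = -μ w - (1 - μ) u`: a
strongly repelling direction coupled to a damped one. A bounded `u` is slaved to `w`, and the same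
small-gain argument applies. -/
theorem tendsto_zero_of_strong_feedback (h : IsVariationalSolution μ e P u v) (hμ : 0 < μ)
    (hP : ∀ t, P t ∈ Set.Icc 0 b) (he : ∀ᶠ t in atTop, K ≤ e t - 1 - P t)
    (hK : 2 * (b * slowGain μ) < K) (hC : ∀ᶠ t in atTop, |u t| ≤ C) :
    Tendsto u atTop (𝓝 0) ∧ Tendsto v atTop (𝓝 0) := by
  have b_nonneg : 0 ≤ b := (hP 0).1.trans (hP 0).2
  have K_pos : 0 < K := by
    have : 0 ≤ slowGain μ := by unfold slowGain; positivity
    exact lt_of_le_of_lt (by positivity) hK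
  have hu : ∀ t, HasDerivAt u ((e t - 1 - P t) * u t + P t * (u t + v t)) t := fun t =>
    (h.hasDerivAt_fst t).congr_deriv (by ring)
  have hw : ∀ t, HasDerivAt (fun t => u t + v t) (-μ * (u t + v t) + -(1 - μ) * u t) t := fun t =>
    ((h.hasDerivAt_fst t).add (h.hasDerivAt_snd t)).congr_deriv (by ring)
  have u_tendsto : Tendsto u atTop (𝓝 0) := by
    refine tendsto_zero_of_eventually_abs_halving (fun M hM hu_le => ?_) hC
    have hw_le := eventually_abs_le_slowGain_mul hμ hM hw hu_le
    refine eventually_abs_le_of_repelled (m := b * (slowGain μ * M)) hu K_pos he ?_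
      (by linarith [mul_lt_mul_of_pos_right hK hM]) hC
    filter_upwards [hw_le] with t hwt
    rw [abs_mul, abs_of_nonneg (hP t).1]
    exact mul_le_mul (hP t).2 hwt (abs_nonneg _) b_nonneg
  have w_tendsto : Tendsto (fun t => u t + v t) atTop (𝓝 0) :=
    tendsto_zero_of_damped hw hμ (.of_forall fun _ => le_rfl)
      (by simpa using u_tendsto.const_mul (-(1 - μ)))
  exact ⟨u_tendsto, by simpa using w_tendsto.sub u_tendsto⟩

end IsVariationalSolution

/-! ### Prescribed conversion rate -/

/-- `(x, y)` solves `ẋ = P(t) y - x`, `ẏ = η - (μ + P(t)) y`: the oscillator with its conversion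
rate regarded as a given function of time. -/
structure IsDrivenSolution (μ η : ℝ) (P x y : ℝ → ℝ) : Prop where
  hasDerivAt_fst : ∀ t, HasDerivAt x (P t * y t - x t) t
  hasDerivAt_snd : ∀ t, HasDerivAt y (η - (μ + P t) * y t) t

namespace IsDrivenSolution

variable {μ η a b W Y θ δ : ℝ} {P x y : ℝ → ℝ}

theorem neg (h : IsDrivenSolution μ η P x y) :
    IsDrivenSolution μ (-η) P (fun t => -x t) (fun t => -y t) where
  hasDerivAt_fst t := (h.hasDerivAt_fst t).neg.congr_deriv (by ring)
  hasDerivAt_snd t := (h.hasDerivAt_snd t).neg.congr_deriv (by ring)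

theorem eventually_abs_snd_le (h : IsDrivenSolution μ η P x y) (hμa : 0 < μ + a)
    (hP : ∀ t, a ≤ P t) (hW : |η| < (μ + a) * W) : ∀ᶠ t in atTop, |y t| ≤ W :=
  eventually_abs_le_of_damped (k := fun t => μ + P t) (g := fun _ => η)
    (fun t => (h.hasDerivAt_snd t).congr_deriv (by ring)) hμa
    (.of_forall fun t => by linarith [hP t]) (.of_forall fun _ => le_rfl) hW

theorem eventually_le_snd (h : IsDrivenSolution μ η P x y)
    (hP : ∀ t, μ + P t ∈ Set.Icc 0 (μ + b)) (hY : 0 ≤ Y) (hYη : (μ + b) * Y < η) :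
    ∀ᶠ t in atTop, Y ≤ y t := by
  refine eventually_ge_of_le_deriv_below h.hasDerivAt_snd (sub_pos.2 hYη)
    (.of_forall fun t hyt => ?_)
  have := mul_le_mul_of_nonneg_left hyt (hP t).1
  have := mul_le_mul_of_nonneg_right (hP t).2 hY
  linarith

theorem exists_eventually_abs_velocity_le (h : IsDrivenSolution μ η P x y) (hμ : 0 ≤ μ)
    (ha : 0 < a) (hP : ∀ t, P t ∈ Set.Icc a b) :
    ∃ C, ∀ᶠ t in atTop, |P t * y t - x t| ≤ C := by
  obtain ⟨W, hW⟩ := exists_gt (|η| / (μ + a))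
  rw [div_lt_iff₀' (by linarith)] at hW
  have forcing_le : ∀ᶠ t in atTop, |P t * y t| ≤ b * W := by
    filter_upwards [h.eventually_abs_snd_le (by linarith) (fun t => (hP t).1) hW] with t hyt
    have P_nonneg := ha.le.trans (hP t).1
    rw [abs_mul, abs_of_nonneg P_nonneg]
    exact mul_le_mul (hP t).2 hyt (abs_nonneg _) (P_nonneg.trans (hP t).2)
  have x_le : ∀ᶠ t in atTop, |x t| ≤ b * W + 1 :=
    eventually_abs_le_of_damped (k := fun _ => 1)
      (fun t => (h.hasDerivAt_fst t).congr_deriv (by ring)) one_pos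
      (.of_forall fun _ => le_rfl) forcing_le (by linarith)
  refine ⟨b * W + (b * W + 1), ?_⟩
  filter_upwards [forcing_le, x_le] with t h₁ h₂
  exact (abs_sub _ _).trans (add_le_add h₁ h₂)

/-- If `x` stayed below `θ`, then `(a + μ) x + a y` would grow at a linear rate, hence `y` and
then `ẋ` would tend to infinity. -/
theorem not_eventually_fst_le (h : IsDrivenSolution μ η P x y) (hμ : 0 ≤ μ) (haμ : 0 ≤ a + μ)
    (hP : ∀ᶠ t in atTop, a * y t ≤ P t * y t) (hθ : (a + μ) * θ < a * η) :
    ¬∀ᶠ t in atTop, x t ≤ θ := by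
  intro hx
  have combination_tendsto : Tendsto (fun t => (a + μ) * x t + a * y t) atTop atTop := by
    refine tendsto_atTop_of_eventually_le_deriv (fun t =>
      ((h.hasDerivAt_fst t).const_mul (a + μ)).add ((h.hasDerivAt_snd t).const_mul a))
      (sub_pos.2 hθ) ?_
    filter_upwards [hP, hx] with t hPt hxt
    have := mul_le_mul_of_nonneg_left hPt hμ
    have := mul_le_mul_of_nonneg_left hxt haμ
    linarith
  have x_tendsto : Tendsto x atTop atTop := by
    refine tendsto_atTop_of_eventually_le_deriv h.hasDerivAt_fst one_pos ?_
    filter_upwards [hP, hx, combination_tendsto.eventually_ge_atTop ((a + μ) * θ + θ + 1)]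
      with t hPt hxt hLt
    have := mul_le_mul_of_nonneg_left hxt haμ
    linarith
  obtain ⟨t, hle, hgt⟩ := (hx.and (x_tendsto.eventually_gt_atTop θ)).exists
  exact hle.not_gt hgt

theorem not_eventually_le_fst (h : IsDrivenSolution μ η P x y) (hμ : 0 ≤ μ) (hbμ : 0 ≤ b + μ)
    (hP : ∀ᶠ t in atTop, P t * y t ≤ b * y t) (hθ : b * η < (b + μ) * θ) :
    ¬∀ᶠ t in atTop, θ ≤ x t := fun hx =>
  h.neg.not_eventually_fst_le (θ := -θ) hμ hbμ (hP.mono fun t ht => by linarith)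
    (by linarith) (hx.mono fun t => neg_le_neg)

/-- `(η - 1) / μ` is the substrate level of the equilibrium with `x = 1`. -/
theorem eventually_abs_snd_sub_le (h : IsDrivenSolution μ η P x y) (hμ : 0 < μ) (hδ : 0 < δ)
    (hx : ∀ᶠ t in atTop, |x t - 1| ≤ δ) :
    ∀ᶠ t in atTop, |y t - (η - 1) / μ| ≤ (slowGain μ + 1) * δ := by
  have sum_hasDerivAt : ∀ t, HasDerivAt (fun t => x t - 1 + (y t - (η - 1) / μ))
      (-μ * (x t - 1 + (y t - (η - 1) / μ)) + -(1 - μ) * (x t - 1)) t := fun t =>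
    (((h.hasDerivAt_fst t).sub_const 1).add ((h.hasDerivAt_snd t).sub_const _)).congr_deriv
      (by field_simp; ring)
  filter_upwards [hx, eventually_abs_le_slowGain_mul hμ hδ sum_hasDerivAt hx] with t hxt hsum
  rw [abs_le] at *
  constructor <;> linarith

end IsDrivenSolution

/-! ### Switching conversion rate -/

/-- A positive increasing conversion rate with limits `a` and `b` at `-∞` and `+∞` whose derivative
is `o(1 / z)` at infinity; for the oscillator, `p = α + β φ`. -/
structure IsSwitch (p : ℝ → ℝ) (a b : ℝ) : Prop where
  contDiff : ContDiff ℝ 1 p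
  deriv_pos : ∀ z, 0 < deriv p z
  tendsto_atBot : Tendsto p atBot (𝓝 a)
  tendsto_atTop : Tendsto p atTop (𝓝 b)
  tendsto_mul_deriv : Tendsto (fun z => z * deriv p z) (cobounded ℝ) (𝓝 0)
  left_pos : 0 < a

theorem tendsto_div_nhdsGT_zero_atTop {δ : ℝ} (hδ : 0 < δ) :
    Tendsto (fun ε => δ / ε) (𝓝[>] 0) atTop := by
  simpa only [div_eq_mul_inv] using tendsto_inv_nhdsGT_zero.const_mul_atTop hδ

theorem eventually_nhdsGT_lt_of_continuous {f g : ℝ → ℝ} {s : ℝ} (hf : Continuous f)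
    (hg : Continuous g) (h : f s < g s) : ∀ᶠ δ in 𝓝[>] s, f δ < g δ :=
  ((hf.tendsto s).eventually_lt (hg.tendsto s) h).filter_mono nhdsWithin_le_nhds

namespace IsSwitch

variable {p : ℝ → ℝ} {a b δ g : ℝ}

theorem strictMono (hp : IsSwitch p a b) : StrictMono p :=
  strictMono_of_deriv_pos hp.deriv_pos

theorem mem_Icc (hp : IsSwitch p a b) (z : ℝ) : p z ∈ Set.Icc a b :=
  ⟨hp.strictMono.monotone.le_of_tendsto hp.tendsto_atBot z,
    hp.strictMono.monotone.ge_of_tendsto hp.tendsto_atTop z⟩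

theorem pos (hp : IsSwitch p a b) (z : ℝ) : 0 < p z :=
  hp.left_pos.trans_le (hp.mem_Icc z).1

theorem left_le_right (hp : IsSwitch p a b) : a ≤ b :=
  (hp.mem_Icc 0).1.trans (hp.mem_Icc 0).2

theorem right_pos (hp : IsSwitch p a b) : 0 < b :=
  hp.left_pos.trans_le hp.left_le_right

theorem hasDerivAt (hp : IsSwitch p a b) (z : ℝ) : HasDerivAt p (deriv p z) z :=
  (hp.contDiff.differentiable one_ne_zero z).hasDerivAt

theorem eventually_deriv_div_le (hp : IsSwitch p a b) (hδ : 0 < δ) (hg : 0 < g) :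
    ∀ᶠ ε in 𝓝[>] (0 : ℝ), ∀ s, δ ≤ |s| → deriv p (s / ε) / ε ≤ g := by
  have small_far_away : ∀ᶠ z in cobounded ℝ, |z * deriv p z| < g * δ := by
    simpa only [Real.dist_0_eq_abs] using
      Metric.tendsto_nhds.1 hp.tendsto_mul_deriv (g * δ) (by positivity)
  obtain ⟨R, -, hR⟩ := hasBasis_cobounded_norm.eventually_iff.1 small_far_away
  filter_upwards [(tendsto_div_nhdsGT_zero_atTop hδ).eventually_ge_atTop R, self_mem_nhdsWithin]
    with ε hRε (hε : 0 < ε) s hs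
  have s_pos : 0 < |s| := hδ.trans_le hs
  have R_le : R ≤ |s / ε| := by
    rw [abs_div, abs_of_pos hε]
    exact hRε.trans (by gcongr)
  have scaled := hR (x := s / ε) R_le
  rw [abs_mul, abs_of_pos (hp.deriv_pos _), abs_div, abs_of_pos hε] at scaled
  refine le_of_mul_le_mul_left ?_ s_pos
  calc |s| * (deriv p (s / ε) / ε) = |s| / ε * deriv p (s / ε) := by ring
    _ ≤ g * δ := scaled.le
    _ ≤ g * |s| := by gcongr
    _ = |s| * g := mul_comm _ _

end IsSwitch

/-- `(x, y)` solves the oscillator with conversion rate `p ((x - 1) / ε)`. -/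
def IsFeedbackSolution (p : ℝ → ℝ) (μ η ε : ℝ) (x y : ℝ → ℝ) : Prop :=
  IsDrivenSolution μ η (fun t => p ((x t - 1) / ε)) x y

/-- The velocity of the solution `(x, y)` of the oscillator tends to zero. -/
def VelocityVanishes (p : ℝ → ℝ) (μ η ε : ℝ) (x y : ℝ → ℝ) : Prop :=
  Tendsto (fun t => p ((x t - 1) / ε) * y t - x t) atTop (𝓝 0) ∧
    Tendsto (fun t => η - (μ + p ((x t - 1) / ε)) * y t) atTop (𝓝 0)

namespace IsFeedbackSolution

variable {p x y : ℝ → ℝ} {μ η ε a b δ g m W Y Z : ℝ}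

theorem isVariationalSolution (h : IsFeedbackSolution p μ η ε x y) (hp : IsSwitch p a b) :
    IsVariationalSolution μ (fun t => deriv p ((x t - 1) / ε) / ε * y t)
      (fun t => p ((x t - 1) / ε)) (fun t => p ((x t - 1) / ε) * y t - x t)
      (fun t => η - (μ + p ((x t - 1) / ε)) * y t) := by
  have rate_hasDerivAt : ∀ t, HasDerivAt (fun t => p ((x t - 1) / ε))
      (deriv p ((x t - 1) / ε) * ((p ((x t - 1) / ε) * y t - x t) / ε)) t := fun t =>
    (hp.hasDerivAt _).comp t (((h.hasDerivAt_fst t).sub_const 1).div_const ε)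
  constructor <;> intro t
  · exact (((rate_hasDerivAt t).mul (h.hasDerivAt_snd t)).sub (h.hasDerivAt_fst t)).congr_deriv
      (by ring)
  · exact (((rate_hasDerivAt t).const_add μ).mul (h.hasDerivAt_snd t)).const_sub η |>.congr_deriv
      (by ring)

theorem eventually_le_snd (h : IsFeedbackSolution p μ η ε x y) (hp : IsSwitch p a b) (hμ : 0 ≤ μ)
    (hY : 0 ≤ Y) (hYη : (μ + b) * Y < η) : ∀ᶠ t in atTop, Y ≤ y t :=
  IsDrivenSolution.eventually_le_snd h
    (fun t => ⟨add_nonneg hμ (hp.pos _).le, by linarith [(hp.mem_Icc ((x t - 1) / ε)).2]⟩) hY hYη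

theorem eventually_snd_nonneg (h : IsFeedbackSolution p μ η ε x y) (hp : IsSwitch p a b)
    (hμ : 0 ≤ μ) (hη : 0 < η) : ∀ᶠ t in atTop, 0 ≤ y t :=
  h.eventually_le_snd hp hμ le_rfl (by rwa [mul_zero])

theorem eventually_snd_le (h : IsFeedbackSolution p μ η ε x y) (hp : IsSwitch p a b) (hμ : 0 ≤ μ)
    (hη : 0 < η) (hW : η < (μ + a) * W) : ∀ᶠ t in atTop, y t ≤ W :=
  (IsDrivenSolution.eventually_abs_snd_le h (add_pos_of_nonneg_of_pos hμ hp.left_pos)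
    (fun _ => (hp.mem_Icc _).1) (by rwa [abs_of_pos hη])).mono fun _ => le_of_abs_le

theorem velocityVanishes_of_eventually_deriv_le (h : IsFeedbackSolution p μ η ε x y)
    (hp : IsSwitch p a b) (hμ : 0 ≤ μ) (hη : 0 < η) (hε : 0 < ε) (hW : η < (μ + a) * W)
    (hg : 8 * b * (g * W) < a) (hx : ∀ᶠ t in atTop, deriv p ((x t - 1) / ε) / ε ≤ g) :
    VelocityVanishes p μ η ε x y := by
  obtain ⟨C, hC⟩ := IsDrivenSolution.exists_eventually_abs_velocity_le h hμ hp.left_pos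
    fun t => hp.mem_Icc _
  refine (h.isVariationalSolution hp).tendsto_zero_of_weak_feedback hμ hp.left_pos
    (fun t => hp.mem_Icc _) ?_ hg hC
  filter_upwards [h.eventually_snd_nonneg hp hμ hη, h.eventually_snd_le hp hμ hη hW, hx]
    with t hy₀ hyW hxt
  have gain_nonneg : 0 ≤ deriv p ((x t - 1) / ε) / ε := div_nonneg (hp.deriv_pos _).le hε.le
  exact ⟨mul_nonneg gain_nonneg hy₀, mul_le_mul hxt hyW hy₀ (gain_nonneg.trans hxt)⟩

theorem velocityVanishes_of_eventually_le_deriv (h : IsFeedbackSolution p μ η ε x y)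
    (hp : IsSwitch p a b) (hμ : 0 < μ) (hε : 0 < ε)
    (hmY : 2 * (b * slowGain μ) + 1 + b < m * Y / ε) (hy : ∀ᶠ t in atTop, Y ≤ y t)
    (hY : 0 ≤ Y) (hx : ∀ᶠ t in atTop, m ≤ deriv p ((x t - 1) / ε)) :
    VelocityVanishes p μ η ε x y := by
  obtain ⟨C, hC⟩ := IsDrivenSolution.exists_eventually_abs_velocity_le h hμ.le hp.left_pos
    fun t => hp.mem_Icc _
  refine (h.isVariationalSolution hp).tendsto_zero_of_strong_feedback (b := b)
    (K := m * Y / ε - 1 - b) hμ (fun t => ⟨(hp.pos _).le, (hp.mem_Icc _).2⟩) ?_ (by linarith) hC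
  filter_upwards [hy, hx] with t hyt hxt
  have rate_le := (hp.mem_Icc ((x t - 1) / ε)).2
  have gain_le : m * Y / ε ≤ deriv p ((x t - 1) / ε) / ε * y t := by
    rw [div_mul_eq_mul_div]
    gcongr
    exact (hp.deriv_pos _).le
  linarith

theorem eventually_mem_layer (h : IsFeedbackSolution p μ η ε x y) (hp : IsSwitch p a b)
    (hμ : 0 ≤ μ) (hη : 0 < η) (hε : 0 < ε) (hx : ∀ᶠ t in atTop, x t ∈ Set.Icc (1 - δ) (1 + δ))
    (hy : ∀ᶠ t in atTop, y t ∈ Set.Icc Y W) (hW : p (-Z) * W < 1 - δ) (hY : 1 + δ < p Z * Y) :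
    ∀ᶠ t in atTop, (x t - 1) / ε ∈ Set.Icc (-Z) Z := by
  have y_nonneg := h.eventually_snd_nonneg hp hμ hη
  have below : ∀ᶠ t in atTop, x t < 1 + ε * Z := by
    refine eventually_lt_of_le_deriv_above h.hasDerivAt_fst (sub_pos.2 hY) ?_
      (hx.mono fun t ht => ht.2)
    filter_upwards [hx, hy, y_nonneg] with t hxt hyt hy₀ hZ
    have rate_ge : p Z ≤ p ((x t - 1) / ε) := by
      refine hp.strictMono.monotone ?_
      rw [le_div_iff₀ hε]
      linarith
    have : p Z * Y ≤ p ((x t - 1) / ε) * y t :=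
      (mul_le_mul_of_nonneg_left hyt.1 (hp.pos Z).le).trans (mul_le_mul_of_nonneg_right rate_ge hy₀)
    linarith [hxt.2]
  have above : ∀ᶠ t in atTop, -x t < -(1 - ε * Z) := by
    refine eventually_lt_of_le_deriv_above (fun t => (h.hasDerivAt_fst t).neg) (sub_pos.2 hW) ?_
      (hx.mono fun t ht => neg_le_neg ht.1)
    filter_upwards [hx, hy, y_nonneg] with t hxt hyt hy₀ hZ
    have rate_le : p ((x t - 1) / ε) ≤ p (-Z) := by
      refine hp.strictMono.monotone ?_
      rw [div_le_iff₀ hε]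
      linarith
    have : p ((x t - 1) / ε) * y t ≤ p (-Z) * W :=
      (mul_le_mul_of_nonneg_right rate_le hy₀).trans
        (mul_le_mul_of_nonneg_left hyt.2 (hp.pos (-Z)).le)
    linarith [hxt.1]
  filter_upwards [below, above] with t h₁ h₂
  rw [Set.mem_Icc, le_div_iff₀ hε, div_le_iff₀ hε]
  constructor <;> linarith

theorem velocityVanishes_of_eventually_abs_le (h : IsFeedbackSolution p μ η ε x y)
    (hp : IsSwitch p a b) (hμ : 0 < μ) (hη : 0 < η) (hδ : 0 < δ) (hε : 0 < ε)
    (hmZ : ∀ z ∈ Set.Icc (-Z) Z, m ≤ deriv p z)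
    (hδW : (η - 1) / μ + (slowGain μ + 1) * δ ≤ W) (hW : p (-Z) * W < 1 - δ)
    (hδY : Y ≤ (η - 1) / μ - (slowGain μ + 1) * δ) (hY₀ : 0 ≤ Y) (hY : 1 + δ < p Z * Y)
    (hmY : 2 * (b * slowGain μ) + 1 + b < m * Y / ε)
    (hx : ∀ᶠ t in atTop, |x t - 1| ≤ δ) : VelocityVanishes p μ η ε x y := by
  have hy : ∀ᶠ t in atTop, y t ∈ Set.Icc Y W :=
    (IsDrivenSolution.eventually_abs_snd_sub_le h hμ hδ hx).mono fun t ht =>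
      ⟨by linarith [neg_le_of_abs_le ht], by linarith [le_of_abs_le ht]⟩
  have x_mem : ∀ᶠ t in atTop, x t ∈ Set.Icc (1 - δ) (1 + δ) := hx.mono fun t ht =>
    ⟨by linarith [neg_le_of_abs_le ht], by linarith [le_of_abs_le ht]⟩
  exact h.velocityVanishes_of_eventually_le_deriv hp hμ hε hmY (hy.mono fun t ht => ht.1) hY₀
    ((h.eventually_mem_layer hp hμ.le hη hε x_mem hy hW hY).mono fun t => hmZ _)

end IsFeedbackSolution

/-! ### Sharp switches -/

namespace IsSwitch

variable {p : ℝ → ℝ} {a b μ η δ c : ℝ}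

theorem eventually_velocityVanishes_of_away (hp : IsSwitch p a b) (hμ : 0 ≤ μ) (hη : 0 < η)
    (hδ : 0 < δ) : ∀ᶠ ε in 𝓝[>] (0 : ℝ), ∀ x y, IsFeedbackSolution p μ η ε x y →
      (∀ᶠ t in atTop, δ ≤ |x t - 1|) → VelocityVanishes p μ η ε x y := by
  have μa_pos : 0 < μ + a := add_pos_of_nonneg_of_pos hμ hp.left_pos
  have a_pos := hp.left_pos
  have b_pos := hp.right_pos
  obtain ⟨W, hW⟩ := exists_gt (η / (μ + a))
  have W_pos : 0 < W := (div_pos hη μa_pos).trans hW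
  rw [div_lt_iff₀' μa_pos] at hW
  filter_upwards [hp.eventually_deriv_div_le (g := a / (16 * b * W)) hδ (by positivity),
    self_mem_nhdsWithin] with ε hgε (hε : 0 < ε) x y h hx
  refine h.velocityVanishes_of_eventually_deriv_le hp hμ hη hε hW ?_ (hx.mono fun t => hgε _)
  calc 8 * b * (a / (16 * b * W) * W) = a / 2 := by field_simp; norm_num
    _ < a := half_lt_self a_pos

theorem eventually_ge_or_lt_right (hp : IsSwitch p a b) (hμ : 0 ≤ μ) (hηR : 1 + μ / b < η) :
    ∀ᶠ δ in 𝓝[>] (0 : ℝ), ∀ᶠ ε in 𝓝[>] (0 : ℝ), ∀ x y, IsFeedbackSolution p μ η ε x y →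
      (∀ᶠ t in atTop, 1 + δ ≤ x t) ∨ ∀ᶠ t in atTop, x t < 1 + δ := by
  have b_pos := hp.right_pos
  have μb_pos : 0 < μ + b := add_pos_of_nonneg_of_pos hμ b_pos
  obtain ⟨Y, hbY, hYη⟩ : ∃ Y, 1 / b < Y ∧ Y < η / (μ + b) := by
    refine exists_between ?_
    rwa [lt_div_iff₀ μb_pos, one_div_mul_eq_div, add_comm, add_div, div_self b_pos.ne']
  have Y_nonneg : 0 ≤ Y := (one_div_pos.2 b_pos).le.trans hbY.le
  rw [div_lt_iff₀' b_pos] at hbY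
  rw [lt_div_iff₀' μb_pos] at hYη
  filter_upwards [eventually_nhdsGT_lt_of_continuous (s := 0) (f := fun δ => 1 + δ)
    (g := fun _ => b * Y) (by fun_prop) (by fun_prop) (by simpa), self_mem_nhdsWithin]
    with δ hδY hδ
  have rate_tendsto : Tendsto (fun ε => p (δ / ε) * Y) (𝓝[>] 0) (𝓝 (b * Y)) :=
    (hp.tendsto_atTop.comp (tendsto_div_nhdsGT_zero_atTop hδ)).mul_const Y
  filter_upwards [rate_tendsto.eventually_const_lt hδY] with ε hε x y h
  refine eventually_ge_or_eventually_lt_of_deriv_pos h.hasDerivAt_fst ?_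
  filter_upwards [h.eventually_le_snd hp hμ Y_nonneg hYη] with t hyt hxt
  rw [hxt, add_sub_cancel_left]
  linarith [mul_le_mul_of_nonneg_left hyt (hp.pos (δ / ε)).le]

theorem eventually_le_or_gt_left (hp : IsSwitch p a b) (hμ : 0 ≤ μ) (hη : 0 < η)
    (hηL : η < 1 + μ / a) :
    ∀ᶠ δ in 𝓝[>] (0 : ℝ), ∀ᶠ ε in 𝓝[>] (0 : ℝ), ∀ x y, IsFeedbackSolution p μ η ε x y →
      (∀ᶠ t in atTop, x t ≤ 1 - δ) ∨ ∀ᶠ t in atTop, 1 - δ < x t := by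
  have a_pos := hp.left_pos
  have μa_pos : 0 < μ + a := add_pos_of_nonneg_of_pos hμ a_pos
  obtain ⟨W, hWη, haW⟩ : ∃ W, η / (μ + a) < W ∧ W < 1 / a := by
    refine exists_between ?_
    rwa [div_lt_iff₀ μa_pos, one_div_mul_eq_div, add_comm, add_div, div_self a_pos.ne']
  rw [lt_div_iff₀' a_pos] at haW
  rw [div_lt_iff₀' μa_pos] at hWη
  filter_upwards [eventually_nhdsGT_lt_of_continuous (s := 0) (f := fun _ => a * W)
    (g := fun δ => 1 - δ) (by fun_prop) (by fun_prop) (by simpa), self_mem_nhdsWithin]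
    with δ hδW hδ
  have rate_tendsto : Tendsto (fun ε => p (-(δ / ε)) * W) (𝓝[>] 0) (𝓝 (a * W)) :=
    (hp.tendsto_atBot.comp
      (tendsto_neg_atTop_atBot.comp (tendsto_div_nhdsGT_zero_atTop hδ))).mul_const W
  filter_upwards [rate_tendsto.eventually_lt_const hδW] with ε hε x y h
  have barrier := eventually_ge_or_eventually_lt_of_deriv_pos (a := -(1 - δ))
    (fun t => (h.hasDerivAt_fst t).neg) (by
      filter_upwards [h.eventually_snd_le hp hμ hη hWη] with t hyt hxt
      rw [neg_inj.1 hxt, sub_sub_cancel_left, neg_div]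
      linarith [mul_le_mul_of_nonneg_left hyt (hp.pos (-(δ / ε))).le])
  simpa only [Pi.neg_apply, neg_le_neg_iff, neg_lt_neg_iff] using barrier

theorem eventually_not_eventually_lt_right (hp : IsSwitch p a b) (hμ : 0 ≤ μ) (hη : 0 < η)
    (hηL : 1 + μ / a < η) : ∀ᶠ δ in 𝓝[>] (0 : ℝ), ∀ ε x y, IsFeedbackSolution p μ η ε x y →
      ¬∀ᶠ t in atTop, x t < 1 + δ := by
  have a_pos := hp.left_pos
  have equilibrium_gt : (a + μ) * (1 + 0) < a * η := by
    rwa [add_zero, mul_one, ← div_lt_iff₀' a_pos, add_div, div_self a_pos.ne']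
  filter_upwards [eventually_nhdsGT_lt_of_continuous (f := fun δ => (a + μ) * (1 + δ))
    (by fun_prop) continuous_const equilibrium_gt] with δ hδ ε x y h hx
  refine IsDrivenSolution.not_eventually_fst_le h hμ (by positivity) ?_ hδ
    (hx.mono fun t => le_of_lt)
  exact (h.eventually_snd_nonneg hp hμ hη).mono fun t =>
    mul_le_mul_of_nonneg_right (hp.mem_Icc _).1

theorem eventually_not_eventually_gt_left (hp : IsSwitch p a b) (hμ : 0 ≤ μ) (hη : 0 < η)
    (hηR : η < 1 + μ / b) : ∀ᶠ δ in 𝓝[>] (0 : ℝ), ∀ ε x y, IsFeedbackSolution p μ η ε x y →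
      ¬∀ᶠ t in atTop, 1 - δ < x t := by
  have b_pos := hp.right_pos
  have equilibrium_lt : b * η < (b + μ) * (1 - 0) := by
    rwa [sub_zero, mul_one, ← lt_div_iff₀' b_pos, add_div, div_self b_pos.ne']
  filter_upwards [eventually_nhdsGT_lt_of_continuous (g := fun δ => (b + μ) * (1 - δ))
    continuous_const (by fun_prop) equilibrium_lt] with δ hδ ε x y h hx
  refine IsDrivenSolution.not_eventually_le_fst h hμ (by positivity) ?_ hδ
    (hx.mono fun t => le_of_lt)
  exact (h.eventually_snd_nonneg hp hμ hη).mono fun t =>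
    mul_le_mul_of_nonneg_right (hp.mem_Icc _).2

theorem exists_mul_lt_one_lt_mul (hp : IsSwitch p a b) (ha : a * c < 1) (hb : 1 < b * c) :
    ∃ Z, p (-Z) * c < 1 ∧ 1 < p Z * c :=
  ((((hp.tendsto_atBot.comp tendsto_neg_atTop_atBot).mul_const c).eventually_lt_const ha).and
    ((hp.tendsto_atTop.mul_const c).eventually_const_lt hb)).exists

theorem exists_pos_forall_le_deriv (hp : IsSwitch p a b) (Z : ℝ) :
    ∃ m > 0, ∀ z ∈ Set.Icc (-Z) Z, m ≤ deriv p z :=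
  isCompact_Icc.exists_forall_le' (hp.contDiff.continuous_deriv le_rfl).continuousOn
    fun z _ => hp.deriv_pos z

theorem eventually_velocityVanishes_of_near (hp : IsSwitch p a b) (hμ : 0 < μ) (hη : 0 < η)
    (hηR : 1 + μ / b < η) (hηL : η < 1 + μ / a) :
    ∀ᶠ δ in 𝓝[>] (0 : ℝ), ∀ᶠ ε in 𝓝[>] (0 : ℝ), ∀ x y, IsFeedbackSolution p μ η ε x y →
      (∀ᶠ t in atTop, |x t - 1| ≤ δ) → VelocityVanishes p μ η ε x y := by
  obtain ⟨Z, hZL, hZR⟩ : ∃ Z, p (-Z) * ((η - 1) / μ) < 1 ∧ 1 < p Z * ((η - 1) / μ) := by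
    refine hp.exists_mul_lt_one_lt_mul ?_ ?_
    · rw [← mul_div_assoc, div_lt_one hμ, ← lt_div_iff₀' hp.left_pos]
      linarith
    · rw [← mul_div_assoc, one_lt_div hμ, ← div_lt_iff₀' hp.right_pos]
      linarith
  obtain ⟨m, m_pos, hm⟩ := hp.exists_pos_forall_le_deriv Z
  filter_upwards [self_mem_nhdsWithin,
    eventually_nhdsGT_lt_of_continuous (s := 0) (g := fun δ => 1 - δ)
      (f := fun δ => p (-Z) * ((η - 1) / μ + (slowGain μ + 1) * δ))
      (by fun_prop) (by fun_prop) (by simpa),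
    eventually_nhdsGT_lt_of_continuous (s := 0) (f := fun δ => 1 + δ)
      (g := fun δ => p Z * ((η - 1) / μ - (slowGain μ + 1) * δ))
      (by fun_prop) (by fun_prop) (by simpa)] with δ (hδ : 0 < δ) hWδ hYδ
  have Y_pos : 0 < (η - 1) / μ - (slowGain μ + 1) * δ :=
    pos_of_mul_pos_right (by linarith) (hp.pos Z).le
  filter_upwards [self_mem_nhdsWithin,
    (tendsto_div_nhdsGT_zero_atTop (mul_pos m_pos Y_pos)).eventually_gt_atTop _]
    with ε hε hmε x y h hx
  exact h.velocityVanishes_of_eventually_abs_le hp hμ hη hδ hε hm le_rfl hWδ le_rfl Y_pos.le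
    hYδ hmε hx

theorem eventually_velocityVanishes_of_gt_left (hp : IsSwitch p a b) (hμ : 0 ≤ μ) (hη : 0 < η)
    (hηL : 1 + μ / a < η) : ∀ᶠ ε in 𝓝[>] (0 : ℝ), ∀ x y, IsFeedbackSolution p μ η ε x y →
      VelocityVanishes p μ η ε x y := by
  have hηR : 1 + μ / b < η := hηL.trans_le' <|
    add_le_add_right (div_le_div_of_nonneg_left hμ hp.left_pos hp.left_le_right) 1
  obtain ⟨δ, hδ, barrier, escape⟩ := (eventually_mem_nhdsWithin.and
    ((hp.eventually_ge_or_lt_right hμ hηR).and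
      (hp.eventually_not_eventually_lt_right hμ hη hηL))).exists
  filter_upwards [barrier, hp.eventually_velocityVanishes_of_away hμ hη hδ] with ε hbar away x y h
  refine away x y h (((hbar x y h).resolve_right (escape ε x y h)).mono fun t ht => ?_)
  exact le_abs.2 (.inl (by linarith))

theorem eventually_velocityVanishes_of_lt_right (hp : IsSwitch p a b) (hμ : 0 ≤ μ) (hη : 0 < η)
    (hηR : η < 1 + μ / b) : ∀ᶠ ε in 𝓝[>] (0 : ℝ), ∀ x y, IsFeedbackSolution p μ η ε x y →
      VelocityVanishes p μ η ε x y := by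
  have hηL : η < 1 + μ / a := hηR.trans_le <|
    add_le_add_right (div_le_div_of_nonneg_left hμ hp.left_pos hp.left_le_right) 1
  obtain ⟨δ, hδ, barrier, escape⟩ := (eventually_mem_nhdsWithin.and
    ((hp.eventually_le_or_gt_left hμ hη hηL).and
      (hp.eventually_not_eventually_gt_left hμ hη hηR))).exists
  filter_upwards [barrier, hp.eventually_velocityVanishes_of_away hμ hη hδ] with ε hbar away x y h
  refine away x y h (((hbar x y h).resolve_right (escape ε x y h)).mono fun t ht => ?_)
  exact le_abs.2 (.inr (by linarith))

theorem eventually_velocityVanishes_of_between (hp : IsSwitch p a b) (hμ : 0 < μ) (hη : 0 < η)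
    (hηR : 1 + μ / b < η) (hηL : η < 1 + μ / a) :
    ∀ᶠ ε in 𝓝[>] (0 : ℝ), ∀ x y, IsFeedbackSolution p μ η ε x y →
      VelocityVanishes p μ η ε x y := by
  obtain ⟨δ, hδ, barrierL, barrierR, near⟩ := (eventually_mem_nhdsWithin.and
    ((hp.eventually_le_or_gt_left hμ.le hη hηL).and ((hp.eventually_ge_or_lt_right hμ.le hηR).and
      (hp.eventually_velocityVanishes_of_near hμ hη hηR hηL)))).exists
  filter_upwards [barrierL, barrierR, near, hp.eventually_velocityVanishes_of_away hμ.le hη hδ]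
    with ε hbarL hbarR hnear away x y h
  rcases hbarL x y h with outside | insideL
  · exact away x y h (outside.mono fun t ht => le_abs.2 (.inr (by linarith)))
  rcases hbarR x y h with outside | insideR
  · exact away x y h (outside.mono fun t ht => le_abs.2 (.inl (by linarith)))
  refine hnear x y h ((insideL.and insideR).mono fun t ht => abs_le.2 ⟨?_, ?_⟩)
  · linarith [ht.1]
  · linarith [ht.2]

theorem eventually_velocityVanishes (hp : IsSwitch p a b) (hμ : 0 ≤ μ) (hη : 0 < η)
    (hηL : η ≠ 1 + μ / a) (hηR : η ≠ 1 + μ / b) :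
    ∀ᶠ ε in 𝓝[>] (0 : ℝ), ∀ x y, IsFeedbackSolution p μ η ε x y →
      VelocityVanishes p μ η ε x y := by
  rcases hηL.lt_or_gt with ltL | gtL
  · rcases hηR.lt_or_gt with ltR | gtR
    · exact hp.eventually_velocityVanishes_of_lt_right hμ hη ltR
    · have hμ₀ : 0 < μ := hμ.lt_of_ne' fun hμ₀ => by
        rw [hμ₀, zero_div] at ltL gtR
        exact ltL.not_gt gtR
      exact hp.eventually_velocityVanishes_of_between hμ₀ hη gtR ltL
  · exact hp.eventually_velocityVanishes_of_gt_left hμ hη gtL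

end IsSwitch

/-! ### Algebraic decay and the oscillator -/

theorem tendsto_mul_deriv_of_eqOn_comp_inv {f G : ℝ → ℝ} {s : Set ℝ} {l : Filter ℝ}
    (hG : ContDiff ℝ 1 G) (hs : IsOpen s) (hsl : s ∈ l) (hl : l ≤ cobounded ℝ)
    (hfG : Set.EqOn f (fun z => G z⁻¹) s) : Tendsto (fun z => z * deriv f z) l (𝓝 0) := by
  have inv_tendsto : Tendsto (fun z : ℝ => z⁻¹) l (𝓝 0) := tendsto_inv₀_cobounded.mono_left hl
  have chain_tendsto : Tendsto (fun z => -(deriv G z⁻¹ * z⁻¹)) l (𝓝 0) := by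
    have := ((hG.continuous_deriv le_rfl).tendsto 0).comp inv_tendsto
    simpa using (this.mul inv_tendsto).neg
  refine chain_tendsto.congr' ?_
  filter_upwards [hsl, hl (Bornology.eventually_ne_cobounded 0)] with z hzs hz
  have f_hasDerivAt : HasDerivAt f (deriv G z⁻¹ * -(z ^ 2)⁻¹) z :=
    ((hG.differentiable one_ne_zero z⁻¹).hasDerivAt.comp z
      (hasDerivAt_inv hz)).congr_of_eventuallyEq (hfG.eventuallyEq_of_mem (hs.mem_nhds hzs))
  rw [f_hasDerivAt.deriv]
  field_simp

theorem tendsto_mul_deriv_of_algebraic_decay {φ φL φR : ℝ → ℝ} {k : ℕ} (hφL : ContDiff ℝ 1 φL)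
    (hφR : ContDiff ℝ 1 φR) (hAL : ∀ z < 0, φ z = ((-z) ^ k)⁻¹ * φL (-z)⁻¹)
    (hAR : ∀ z > 0, φ z = 1 - (z ^ k)⁻¹ * φR z⁻¹) :
    Tendsto (fun z => z * deriv φ z) (cobounded ℝ) (𝓝 0) := by
  rw [IsOrderBornology.cobounded_eq]
  refine .sup ?_ ?_
  · refine tendsto_mul_deriv_of_eqOn_comp_inv (G := fun u => (-u) ^ k * φL (-u))
      (by fun_prop) isOpen_Iio (Iio_mem_atBot 0) IsOrderBornology.atBot_le_cobounded fun z hz => ?_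
    simp only [hAL z hz, inv_neg, ← inv_pow]
  · refine tendsto_mul_deriv_of_eqOn_comp_inv (G := fun u => 1 - u ^ k * φR u)
      (by fun_prop) isOpen_Ioi (Ioi_mem_atTop 0) IsOrderBornology.atTop_le_cobounded fun z hz => ?_
    simp only [hAR z hz, inv_pow]

theorem eq_of_periodic_of_tendsto_velocity_zero {E : Type*} [NormedAddCommGroup E]
    [NormedSpace ℝ E] {F : E → E} {γ : ℝ → E} {T : ℝ}
    (hγ : ∀ t, HasDerivAt γ (F (γ t)) t) (hT : 0 < T) (hper : Function.Periodic γ T)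
    (hF : Tendsto (fun t => F (γ t)) atTop (𝓝 0)) (t s : ℝ) : γ t = γ s := by
  refine is_const_of_deriv_eq_zero (fun t => (hγ t).differentiableAt) (fun t => ?_) t s
  have returns : Tendsto (fun n : ℕ => t + n * T) atTop atTop :=
    tendsto_atTop_add_const_left _ _ (tendsto_natCast_atTop_atTop.atTop_mul_const hT)
  have constant_along_returns : ∀ n : ℕ, F (γ (t + n * T)) = F (γ t) := fun n =>
    congrArg F (hper.nat_mul n t)
  rw [(hγ t).deriv]
  refine tendsto_nhds_unique (tendsto_const_nhds.congr fun n => ?_) (hF.comp returns)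
  exact (constant_along_returns n).symm

section Oscillator

variable {φ : ℝ → ℝ} {α β μ η ε : ℝ}

theorem isSwitch_const_add_const_mul (hφ : ContDiff ℝ 1 φ) (hφ' : ∀ z, 0 < deriv φ z)
    (hφtop : Tendsto φ atTop (𝓝 1)) (hφbot : Tendsto φ atBot (𝓝 0))
    (hdecay : Tendsto (fun z => z * deriv φ z) (cobounded ℝ) (𝓝 0)) (hα : 0 < α) (hβ : 0 < β) :
    IsSwitch (fun z => α + β * φ z) α (α + β) := by
  have deriv_eq : ∀ z, deriv (fun z => α + β * φ z) z = β * deriv φ z := fun z => by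
    rw [deriv_const_add, deriv_const_mul _ (hφ.differentiable one_ne_zero z)]
  exact
    { contDiff := by fun_prop
      deriv_pos := fun z => deriv_eq z ▸ mul_pos hβ (hφ' z)
      tendsto_atBot := by simpa using (hφbot.const_mul β).const_add α
      tendsto_atTop := by simpa using (hφtop.const_mul β).const_add α
      tendsto_mul_deriv := by
        simpa only [deriv_eq, mul_left_comm, mul_zero] using hdecay.const_mul β
      left_pos := hα }

theorem continuous_sdVF (hφ : Continuous φ) : Continuous (sdVF φ α β μ η ε) := by
  unfold sdVF
  fun_prop

theorem isFeedbackSolution_of_hasDerivAt_sdVF {sol : ℝ → ℝ × ℝ}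
    (hsol : ∀ t, HasDerivAt sol (sdVF φ α β μ η ε (sol t)) t) :
    IsFeedbackSolution (fun z => α + β * φ z) μ η ε (fun t => (sol t).1) fun t => (sol t).2 where
  hasDerivAt_fst t := (hasFDerivAt_fst.comp_hasDerivAt t (hsol t) :)
  hasDerivAt_snd t := (hasFDerivAt_snd.comp_hasDerivAt t (hsol t) :).congr_deriv <| by
    simp only [sdVF, ContinuousLinearMap.coe_snd', add_assoc]

theorem VelocityVanishes.tendsto_sdVF {sol : ℝ → ℝ × ℝ}
    (h : VelocityVanishes (fun z => α + β * φ z) μ η ε (fun t => (sol t).1) fun t => (sol t).2) :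
    Tendsto (fun t => sdVF φ α β μ η ε (sol t)) atTop (𝓝 0) := by
  simpa only [sdVF, add_assoc, Prod.mk_zero_zero] using h.1.prodMk_nhds h.2

end Oscillator

theorem no_limit_cycles_away_from_boundary_node_general {φ : ℝ → ℝ} {α β μ η : ℝ}
    (hφ : ContDiff ℝ 1 φ) (hφ' : ∀ z, 0 < deriv φ z)
    (hφtop : Tendsto φ atTop (𝓝 1)) (hφbot : Tendsto φ atBot (𝓝 0))
    (hdecay : Tendsto (fun z => z * deriv φ z) (cobounded ℝ) (𝓝 0))
    (hα : 0 < α) (hβ : 0 < β) (hμ : 0 ≤ μ) (hη : 0 < η)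
    (hηL : η ≠ 1 + μ / α) (hηR : η ≠ 1 + μ / (α + β)) :
    ∃ ε₀ > 0, ∀ ε : ℝ, 0 < ε → ε < ε₀ → ∀ sol : ℝ → ℝ × ℝ,
      (∀ t, HasDerivAt sol (sdVF φ α β μ η ε (sol t)) t) →
      ((∃ T > 0, ∀ t, sol (t + T) = sol t) → ∀ t s, sol t = sol s) ∧
      ∀ p : ℝ × ℝ,
        (∃ u : ℕ → ℝ, Tendsto u atTop atTop ∧ Tendsto (fun n => sol (u n)) atTop (𝓝 p)) →
        sdVF φ α β μ η ε p = 0 := by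
  have hp := isSwitch_const_add_const_mul hφ hφ' hφtop hφbot hdecay hα hβ
  obtain ⟨ε₀, hε₀, hvanish⟩ :=
    mem_nhdsGT_iff_exists_Ioo_subset.1 (hp.eventually_velocityVanishes hμ hη hηL hηR)
  refine ⟨ε₀, hε₀, fun ε hε hεε₀ sol hsol => ?_⟩
  have velocity_tendsto := VelocityVanishes.tendsto_sdVF
    (hvanish ⟨hε, hεε₀⟩ _ _ (isFeedbackSolution_of_hasDerivAt_sdVF hsol))
  constructor
  · rintro ⟨T, hT, hper⟩
    exact eq_of_periodic_of_tendsto_velocity_zero hsol hT hper velocity_tendsto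
  · rintro p ⟨u, hu, hup⟩
    exact tendsto_nhds_unique (((continuous_sdVF hφ.continuous).tendsto p).comp hup)
      (velocity_tendsto.comp hu)

/-- Away from the critical parameter values `η = 1 + μ/α` and `η = 1 + μ/(α+β)`, for all
sufficiently small `ε > 0` the substrate-depletion oscillator has no nonconstant periodic
solutions, and the ω-limit set of every solution with bounded forward orbit consists of
equilibria. -/
theorem no_limit_cycles_away_from_boundary_node
    (φ φL φR : ℝ → ℝ) (k : ℕ) (α β μ η : ℝ)
    (hφ : ContDiff ℝ (⊤ : ℕ∞) φ)
    (hφ0 : ∀ z, 0 < φ z) (hφ1 : ∀ z, φ z < 1)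
    (hφ' : ∀ z, 0 < deriv φ z)
    (hφtop : Tendsto φ atTop (nhds 1)) (hφbot : Tendsto φ atBot (nhds 0))
    (hk : 1 ≤ k)
    (hφL : ContDiff ℝ (⊤ : ℕ∞) φL) (hφR : ContDiff ℝ (⊤ : ℕ∞) φR)
    (hφLnn : ∀ u : ℝ, 0 ≤ u → 0 ≤ φL u) (hφRnn : ∀ u : ℝ, 0 ≤ u → 0 ≤ φR u)
    (hφL0 : 0 < φL 0) (hφR0 : 0 < φR 0)
    (hAL : ∀ z : ℝ, z < 0 → φ z = ((-z) ^ k)⁻¹ * φL (-z)⁻¹)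
    (hAR : ∀ z : ℝ, 0 < z → φ z = 1 - (z ^ k)⁻¹ * φR z⁻¹)
    (hα : 0 < α) (hα1 : α < 1) (hαβ : 1 < α + β)
    (hμ : 0 ≤ μ) (hη : 0 < η)
    (hηL : η ≠ 1 + μ / α) (hηR : η ≠ 1 + μ / (α + β)) :
    ∃ ε₀ > 0, ∀ ε : ℝ, 0 < ε → ε < ε₀ →
      (∀ sol : ℝ → ℝ × ℝ,
        (∀ t, HasDerivAt sol (sdVF φ α β μ η ε (sol t)) t) →
        (∃ T > 0, ∀ t, sol (t + T) = sol t) →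
        ∀ t s, sol t = sol s) ∧
      (∀ sol : ℝ → ℝ × ℝ,
        (∀ t, HasDerivAt sol (sdVF φ α β μ η ε (sol t)) t) →
        (∃ C : ℝ, ∀ t : ℝ, 0 ≤ t → ‖sol t‖ ≤ C) →
        ∀ p : ℝ × ℝ,
          (∃ u : ℕ → ℝ, Tendsto u atTop atTop ∧
            Tendsto (fun n => sol (u n)) atTop (nhds p)) →
          sdVF φ α β μ η ε p = 0) := by
  have hdecay := tendsto_mul_deriv_of_algebraic_decay (hφL.of_le (by simp)) (hφR.of_le (by simp))
    hAL hAR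
  obtain ⟨ε₀, hε₀, h⟩ := no_limit_cycles_away_from_boundary_node_general (hφ.of_le (by simp)) hφ'
    hφtop hφbot hdecay hα (by linarith) hμ hη hηL hηR
  exact ⟨ε₀, hε₀, fun ε hε hεε₀ => ⟨fun sol hsol => (h ε hε hεε₀ sol hsol).1,
    fun sol hsol _ => (h ε hε hεε₀ sol hsol).2⟩⟩
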